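/- arXiv:2307.00147 — 3 statements merged into one kernel-verified Lean document; each statement's English description precedes it below -/
import Mathlib

section
/- Let G = (V, E) be a finite simple undirected graph on a nonempty vertex set, let k be a positive natural number, and suppose there exists a vertex ℓ ∈ V such that every nonempty proper subset A ⊊ V with |E(A, V\A)| < k satisfies ℓ ∈ A. Then G is k-edge-connected, i.e., every pair of vertices of G is k-edge-connected in G. -/
open SimpleGraph

/-- `s` and `t` are `k`-edge-connected in `G`: for every set `F` of edges of `G` with
`|F| < k`, `s` and `t` are reachable from one another in the graph obtained from `G`
by deleting the edges of `F`. -/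
def KEdgeConn {V : Type*} (G : SimpleGraph V) (k : ℕ) (s t : V) : Prop :=
  ∀ F : Finset (Sym2 V), ↑F ⊆ G.edgeSet → F.card < k →
    (G.deleteEdges ↑F).Reachable s t

/-- The set of edges of `G` with exactly one endpoint in `S`, i.e. `E(S, V \ S)`. -/
def crossingEdges {V : Type*} (G : SimpleGraph V) (S : Set V) : Set (Sym2 V) :=
  {e | e ∈ G.edgeSet ∧ ∃ x ∈ S, ∃ y ∉ S, e = s(x, y)}

/-- The induced subgraph `G[S]` is `k`-edge-connected: every pair of vertices of `S`
is `k`-edge-connected in `G[S]`. -/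
def IndKConn {V : Type*} (G : SimpleGraph V) (k : ℕ) (S : Set V) : Prop :=
  ∀ s t : S, KEdgeConn (G.induce S) k s t

/-- If some vertex `ℓ` belongs to every nonempty proper `k`-cut of `G`, then `G` is
`k`-edge-connected. -/
theorem stmt2 {V : Type*} [Fintype V] [Nonempty V] (G : SimpleGraph V) (k : ℕ) (hk : 0 < k)
    (ℓ : V)
    (h : ∀ A : Set V, A.Nonempty → A ≠ Set.univ → (crossingEdges G A).ncard < k → ℓ ∈ A) :
    ∀ s t : V, KEdgeConn G k s t := by
  intro s t F hF hFk
  have key : ∀ v : V, (G.deleteEdges (F : Set (Sym2 V))).Reachable v ℓ := by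
    intro v
    by_contra hv
    refine hv (h {w | (G.deleteEdges (F : Set (Sym2 V))).Reachable v w}
      ⟨v, Reachable.refl v⟩ ?_ ?_)
    · intro hA
      have hl : ℓ ∈ (Set.univ : Set V) := Set.mem_univ ℓ
      rw [← hA] at hl
      exact hv hl
    · refine lt_of_le_of_lt ?_ hFk
      rw [← Set.ncard_coe_finset F]
      refine Set.ncard_le_ncard ?_ F.finite_toSet
      rintro e ⟨he, x, hx, y, hy, rfl⟩
      by_contra hxy
      refine hy (Reachable.trans hx (Adj.reachable ?_))
      rw [deleteEdges_adj]
      exact ⟨he, hxy⟩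
  exact (key s).trans (key t).symm
end

section
/- Let G = (V, E) be a finite simple undirected graph and let k be a positive natural number. There exists a unique partition {V₁, …, V_z} of V such that, for every i, the induced subgraph G[Vᵢ] is k-edge-connected and there is no strict superset Vᵢ' ⊋ Vᵢ for which G[Vᵢ'] is k-edge-connected. Equivalently, the inclusion-maximal vertex sets S ⊆ V such that G[S] is k-edge-connected form a partition of V (these are the maximal k-edge-connected subgraphs of G). -/
open SimpleGraph

lemma reach_of_subset {V : Type*} (G : SimpleGraph V) (k : ℕ) {S T : Set V} (h : S ⊆ T)
    (hS : IndKConn G k S) (F : Finset (Sym2 T)) (hF : ↑F ⊆ (G.induce T).edgeSet)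
    (hc : F.card < k) (s t : V) (hs : s ∈ S) (ht : t ∈ S) :
    ((G.induce T).deleteEdges ↑F).Reachable ⟨s, h hs⟩ ⟨t, h ht⟩ := by
  classical
  have hinj : Function.Injective (Sym2.map (Set.inclusion h)) :=
    Sym2.map.injective (Set.inclusion_injective h)
  have key := hS ⟨s, hs⟩ ⟨t, ht⟩ (F.preimage (Sym2.map (Set.inclusion h)) hinj.injOn) ?_ ?_
  · let f : (G.induce S).deleteEdges
        ↑(F.preimage (Sym2.map (Set.inclusion h)) hinj.injOn) →g
        (G.induce T).deleteEdges ↑F :=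
      { toFun := Set.inclusion h
        map_rel' := by
          intro a b hab
          rw [SimpleGraph.deleteEdges_adj] at hab ⊢
          refine ⟨hab.1, fun hm => hab.2 ?_⟩
          simpa using hm }
    exact key.map f
  · intro e he
    have he' : Sym2.map (Set.inclusion h) e ∈ F := by simpa using he
    have := hF he'
    induction e with
    | _ a b => exact this
  · refine lt_of_le_of_lt ?_ hc
    refine Finset.card_le_card_of_injOn (Sym2.map (Set.inclusion h)) ?_ hinj.injOn
    intro e he
    simpa using he

lemma indKConn_union {V : Type*} (G : SimpleGraph V) (k : ℕ) {S T : Set V} (v : V)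
    (hvS : v ∈ S) (hvT : v ∈ T) (hS : IndKConn G k S) (hT : IndKConn G k T) :
    IndKConn G k (S ∪ T) := by
  have main : ∀ (F : Finset (Sym2 ↥(S ∪ T))), ↑F ⊆ (G.induce (S ∪ T)).edgeSet → F.card < k →
      ∀ s : ↥(S ∪ T), ((G.induce (S ∪ T)).deleteEdges ↑F).Reachable s ⟨v, Or.inl hvS⟩ := by
    rintro F hF hc ⟨s, hs | hs⟩
    · exact reach_of_subset G k Set.subset_union_left hS F hF hc s v hs hvS
    · exact reach_of_subset G k Set.subset_union_right hT F hF hc s v hs hvT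
  intro s t F hF hc
  exact (main F hF hc s).trans (main F hF hc t).symm

/-- The inclusion-maximal vertex sets `S` such that `G[S]` is `k`-edge-connected form a
partition of `V`: every vertex belongs to exactly one such set (the maximal
`k`-edge-connected subgraphs of `G`). -/
theorem stmt6 {V : Type*} [Fintype V] (G : SimpleGraph V) (k : ℕ) (hk : 0 < k) :
    ∀ v : V, ∃! S : Set V,
      (IndKConn G k S ∧ ∀ S' : Set V, S ⊆ S' → IndKConn G k S' → S' = S) ∧ v ∈ S := by
  intro v
  have h0 : IndKConn G k {v} := by
    intro s t F _ _
    rw [Subsingleton.elim s t]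
  obtain ⟨S, hvS, hS⟩ := (Set.toFinite {S : Set V | IndKConn G k S}).exists_le_maximal h0
  have hv : v ∈ S := hvS rfl
  refine ⟨S, ⟨⟨hS.1, fun S' h h' => (hS.2 h' h).antisymm h⟩, hv⟩, ?_⟩
  rintro T ⟨⟨hT, hTm⟩, hvT⟩
  have hU := indKConn_union G k v hv hvT hS.1 hT
  rw [← hTm _ Set.subset_union_right hU]
  exact (hS.2 hU Set.subset_union_left).antisymm Set.subset_union_left
end

section
/- Let G = (V, E) be a finite simple undirected graph, let k be a positive natural number, and let e = {x, y} ∈ E be an edge such that x and y are not k-edge-connected in G. Then for every vertex set S ⊆ V, the induced subgraph G[S] is k-edge-connected if and only if the induced subgraph (G − e)[S] is k-edge-connected, where G − e is G with the edge e deleted. Consequently, G and G − e have exactly the same maximal k-edge-connected subgraphs. -/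
open SimpleGraph

theorem KEdgeConn.reach {V : Type*} {G : SimpleGraph V} {k : ℕ} {s t : V}
    (h : KEdgeConn G k s t) (F : Finset (Sym2 V)) (hF : F.card < k) :
    (G.deleteEdges ↑F).Reachable s t := by
  classical
  have h1 := h (F.filter (fun e => e ∈ G.edgeSet))
    (by intro e he; simp at he; exact he.2)
    (lt_of_le_of_lt (Finset.card_filter_le _ _) hF)
  refine h1.mono ?_
  intro a b hab
  simp only [deleteEdges_adj, Finset.coe_filter, Set.mem_setOf_eq, mem_edgeSet] at hab ⊢
  exact ⟨hab.1, fun hc => hab.2 ⟨hc, hab.1⟩⟩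

theorem KEdgeConn.of_le {V : Type*} {G H : SimpleGraph V} {k : ℕ} {s t : V}
    (hle : G ≤ H) (h : KEdgeConn G k s t) : KEdgeConn H k s t := by
  intro F _ hF
  exact (h.reach F hF).mono (deleteEdges_mono hle)

theorem KEdgeConn.of_induce {V : Type*} {G : SimpleGraph V} {k : ℕ} {S : Set V} {s t : S}
    (h : KEdgeConn (G.induce S) k s t) : KEdgeConn G k s t := by
  classical
  intro F _ hF
  have hinj : Function.Injective (Sym2.map (Subtype.val : S → V)) :=
    Sym2.map.injective Subtype.val_injective
  have h1 := h.reach (F.preimage _ hinj.injOn)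
    (lt_of_le_of_lt (Finset.card_le_card_of_injOn (Sym2.map (Subtype.val : S → V))
      (by intro e he; simpa using he) hinj.injOn) hF)
  refine h1.map (⟨Subtype.val, ?_⟩ : _ →g G.deleteEdges ↑F)
  intro a b hab
  simpa using hab

theorem indKConn_iff {V : Type*} (G : SimpleGraph V) (k : ℕ)
    (x y : V) (hnk : ¬ KEdgeConn G k x y) (S : Set V) :
    IndKConn G k S ↔ IndKConn (G.deleteEdges {s(x, y)}) k S := by
  constructor
  · intro h
    have hS : ¬ (x ∈ S ∧ y ∈ S) := fun ⟨hx, hy⟩ =>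
      hnk (KEdgeConn.of_induce (h ⟨x, hx⟩ ⟨y, hy⟩))
    intro s t
    refine (h s t).of_le ?_
    intro a b hab
    have ha := a.2
    have hb := b.2
    simp only [comap_adj, deleteEdges_adj, Set.mem_singleton_iff, Sym2.eq_iff,
      Function.Embedding.subtype_apply] at hab ⊢
    refine ⟨hab, ?_⟩
    rintro (⟨h1, h2⟩ | ⟨h1, h2⟩)
    · exact hS ⟨h1 ▸ ha, h2 ▸ hb⟩
    · exact hS ⟨h2 ▸ hb, h1 ▸ ha⟩
  · intro h s t
    exact (h s t).of_le (comap_monotone _ (deleteEdges_le (G := G) {s(x, y)}))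

/-- If `e = {x, y}` is an edge of `G` whose endpoints are not `k`-edge-connected in `G`,
then for every `S ⊆ V`, `G[S]` is `k`-edge-connected iff `(G - e)[S]` is; consequently
`G` and `G - e` have exactly the same maximal `k`-edge-connected subgraphs. -/
theorem stmt13 {V : Type*} [Fintype V] (G : SimpleGraph V) (k : ℕ) (hk : 0 < k)
    (x y : V) (hxy : G.Adj x y) (hnk : ¬ KEdgeConn G k x y) :
    (∀ S : Set V, IndKConn G k S ↔ IndKConn (G.deleteEdges {s(x, y)}) k S) ∧
    {S : Set V | IndKConn G k S ∧ ∀ S' : Set V, S ⊆ S' → IndKConn G k S' → S' = S} =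
      {S : Set V | IndKConn (G.deleteEdges {s(x, y)}) k S ∧
        ∀ S' : Set V, S ⊆ S' → IndKConn (G.deleteEdges {s(x, y)}) k S' → S' = S} := by
  have h := indKConn_iff G k x y hnk
  refine ⟨h, ?_⟩
  simp only [h]
end
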